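/- (Theorem on the derivation deviation over the tribraces) In the endomorphism operad of a K-module L, the derivation deviation of ∂ over the tribraces, (dev_{braces} ∂)(h ⊗ f ⊗ g) := ∂{h, f, g} − {h, f, ∂g} − (−1)^{|g|} {h, ∂f, g} − (−1)^{|g|+|f|} {∂h, f, g}, satisfies (−1)^{deg g} (dev_{braces} ∂)(h ⊗ f ⊗ g) = (h • f) ⌣ g + (−1)^{|h|·deg f} f ⌣ (h • g) − h • (f ⌣ g) for all homogeneous h, f, g. -/

import Mathlib

/-!
The identity is obtained by expanding every term of the deviation over the positions of the
operations involved; the expansions use the two associativity laws of the endomorphism operad,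
`pcomp_nested` (sequential) and `pcomp_parallel` (parallel, with a Koszul sign). Write `{h, f, g}` as
the sum over slots `a < b` of `h` receiving `f` and `g`.

* `{h, f, g} • μ` (`tcomp_triFn`): `μ` is inserted into `g`, giving `{h, f, g • μ}`; into `f`, giving
  `± {h, f • μ, g}`; or into a free slot of `h`.
* `{h • μ, f, g}` (`triFn_tcomp_left`): `f` and `g` both avoid `μ`, matching the last case above;
  exactly one of them is inserted into `μ`, giving `{h, μ • f, g}` and `± {h, f, μ • g}`; or both are,
  giving `± h • (f ⌣ g)`.
* `{μ • h, f, g}` (`triFn_mu_left`): `f` and `g` are both inserted into `h`, giving `μ • {h, f, g}`; or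
  exactly one of them is, giving `± (h • f) ⌣ g` and `± f ⌣ (h • g)`.

Hence in the deviation everything cancels but the three cup product terms. All signs depend only on
the parities of the arities, so the final bookkeeping is a check over these parities.
-/

variable {K : Type*} [CommRing K] {L : Type*} [AddCommGroup L] [Module K L]

/-- `(-1)^z` for an integer exponent `z`. -/
def sgn (z : ℤ) : ℤ := (-1) ^ z.natAbs

/-- The underlying function (on `ℕ`-indexed families of elements of `L`) of an
`n`-multilinear map `f ∈ Eⁿ`; equality of such functions is equivalent to equality
of the multilinear maps. -/
def toFn {n : ℕ} (f : MultilinearMap K (fun _ : Fin n => L) L) : (ℕ → L) → L :=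
  fun x => f fun a => x a.val

/-- Partial composition `F ∘ᵢ G`, where `n` is the arity (degree) of `G`:
`(f ∘ᵢ g)(x_0, …) = (-1)^{i(n-1)} f(x_0, …, x_{i-1}, g(x_i, …, x_{i+n-1}), x_{i+n}, …)`. -/
def pcomp (i n : ℕ) (F G : (ℕ → L) → L) : (ℕ → L) → L :=
  fun x => sgn ((i : ℤ) * ((n : ℤ) - 1)) •
    F fun k => if k < i then x k else if k = i then G (fun j => x (i + j)) else x (k + n - 1)

/-- Total composition `F • G := Σ_{i=0}^{m-1} F ∘ᵢ G`, where `m, n` are the arities of `F, G`. -/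
def tcomp (m n : ℕ) (F G : (ℕ → L) → L) : (ℕ → L) → L :=
  ∑ i ∈ Finset.range m, pcomp i n F G

/-- Gerstenhaber bracket `[F, G] := F • G - (-1)^{|F||G|} G • F` for arities `m, n` of `F, G`. -/
def gbr (m n : ℕ) (F G : (ℕ → L) → L) : (ℕ → L) → L :=
  tcomp m n F G - sgn (((m : ℤ) - 1) * ((n : ℤ) - 1)) • tcomp n m G F

/-- Cup product `F ⌣ G := (-1)^m (Mu ∘₀ F) ∘ₘ G`, where `m, n` are the arities of `F, G`. -/
def cupFn (m n : ℕ) (Mu F G : (ℕ → L) → L) : (ℕ → L) → L :=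
  sgn (m : ℤ) • pcomp m n (pcomp 0 m Mu F) G

/-- Gerstenhaber tribraces `{H, F, G} := Σ_{i=0}^{|H|-1} Σ_{j=i+m}^{|F|+|H|} (H ∘ᵢ F) ∘ⱼ G`
for arities `p, m, n` of `H, F, G`. -/
def triFn (p m n : ℕ) (H F G : (ℕ → L) → L) : (ℕ → L) → L :=
  ∑ i ∈ Finset.range (p - 1), ∑ j ∈ Finset.Icc (i + m) (m + p - 2), pcomp j n (pcomp i m H F) G


/-! ### Signs -/

theorem sgn_eq (z : ℤ) : sgn z = if Even z then 1 else -1 := by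
  unfold sgn
  by_cases hz : Even z
  · rw [if_pos hz, (Int.natAbs_even.mpr hz).neg_one_pow]
  · rw [if_neg hz, Odd.neg_one_pow]
    exact Int.natAbs_odd.mpr (Int.not_even_iff_odd.mp hz)

theorem sgn_add (a b : ℤ) : sgn (a + b) = sgn a * sgn b := by
  simp only [sgn_eq, Int.even_add]
  by_cases ha : Even a <;> by_cases hb : Even b <;> simp [ha, hb]

theorem sgn_mul_self (a : ℤ) : sgn a * sgn a = 1 := by
  rw [sgn_eq]; split_ifs <;> rfl

theorem sgn_congr {a b : ℤ} (c : ℤ) (h : a = b + 2 * c) : sgn a = sgn b := by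
  subst h
  simp [sgn_eq, Int.even_add]

/-! ### Operations on families: locality, additivity, and the operad axioms -/

/-- `F` depends only on its first `n` arguments, as an operation of arity `n` does. -/
def DependsBelow (n : ℕ) (F : (ℕ → L) → L) : Prop :=
  ∀ x y : ℕ → L, (∀ j < n, x j = y j) → F x = F y

/-- `F` is additive in its `i`-th argument, all other arguments being held fixed. Only additivity
is required, since every scalar that occurs in the identity is a sign. -/
def AdditiveAt (F : (ℕ → L) → L) (i : ℕ) : Prop :=
  ∀ x : ℕ → L, ∃ φ : L →+ L, ∀ u, F (fun k => if k = i then u else x k) = φ u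

theorem toFn_dependsBelow {n : ℕ} (f : MultilinearMap K (fun _ : Fin n => L) L) :
    DependsBelow n (toFn f) := by
  intro x y hxy
  unfold toFn
  congr 1
  funext a
  exact hxy a a.isLt

theorem toFn_additiveAt {n : ℕ} (f : MultilinearMap K (fun _ : Fin n => L) L) {i : ℕ}
    (hi : i < n) : AdditiveAt (toFn f) i := by
  intro x
  refine ⟨(f.toLinearMap (fun a => x a.val) ⟨i, hi⟩).toAddMonoidHom, fun u => ?_⟩
  simp only [toFn, LinearMap.toAddMonoidHom_coe, MultilinearMap.toLinearMap_apply]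
  congr 1
  funext a
  simp [Function.update_apply, Fin.ext_iff]

section
variable {M : Type*} [AddCommGroup M]

theorem pcomp_sum_left {ι : Type*} (s : Finset ι) (i n : ℕ) (F : ι → (ℕ → M) → M)
    (G : (ℕ → M) → M) :
    pcomp i n (∑ c ∈ s, F c) G = ∑ c ∈ s, pcomp i n (F c) G := by
  funext x
  simp [pcomp, Finset.sum_apply, Finset.smul_sum]

theorem pcomp_smul_left (z : ℤ) (i n : ℕ) (F G : (ℕ → M) → M) :
    pcomp i n (z • F) G = z • pcomp i n F G := by
  funext x
  simp only [pcomp, Pi.smul_apply, smul_smul]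
  rw [mul_comm]

theorem pcomp_sub_left (i n : ℕ) (F F' G : (ℕ → M) → M) :
    pcomp i n (F - F') G = pcomp i n F G - pcomp i n F' G := by
  funext x
  simp only [pcomp, Pi.sub_apply, smul_sub]

/-- If `F` is additive in slot `i`, then `F ∘ᵢ G` at a fixed point is an additive function of the
value of `G`; this yields linearity of `pcomp` in its second operation. -/
theorem AdditiveAt.exists_hom {F : (ℕ → M) → M} {i : ℕ} (hF : AdditiveAt F i) (n : ℕ)
    (x : ℕ → M) :
    ∃ φ : M →+ M, ∀ G : (ℕ → M) → M, pcomp i n F G x = φ (G fun j => x (i + j)) := by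
  obtain ⟨φ, hφ⟩ := hF (fun k => if k < i then x k else x (k + n - 1))
  refine ⟨sgn ((i : ℤ) * ((n : ℤ) - 1)) • φ, fun G => ?_⟩
  rw [AddMonoidHom.smul_apply, ← hφ, pcomp]
  congr 2
  funext k
  split_ifs <;> first | rfl | omega

theorem pcomp_sum_right {ι : Type*} (s : Finset ι) {i : ℕ} (n : ℕ) {F : (ℕ → M) → M}
    (hF : AdditiveAt F i) (G : ι → (ℕ → M) → M) :
    pcomp i n F (∑ c ∈ s, G c) = ∑ c ∈ s, pcomp i n F (G c) := by
  funext x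
  obtain ⟨φ, hφ⟩ := hF.exists_hom n x
  simp [hφ, Finset.sum_apply]

theorem pcomp_smul_right (z : ℤ) {i : ℕ} (n : ℕ) {F : (ℕ → M) → M}
    (hF : AdditiveAt F i) (G : (ℕ → M) → M) :
    pcomp i n F (z • G) = z • pcomp i n F G := by
  funext x
  obtain ⟨φ, hφ⟩ := hF.exists_hom n x
  simp [hφ]

theorem pcomp_sub_right {i : ℕ} (n : ℕ) {F : (ℕ → M) → M}
    (hF : AdditiveAt F i) (G G' : (ℕ → M) → M) :
    pcomp i n F (G - G') = pcomp i n F G - pcomp i n F G' := by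
  funext x
  obtain ⟨φ, hφ⟩ := hF.exists_hom n x
  simp [hφ]

theorem pcomp_zero_right {i : ℕ} (n : ℕ) {F : (ℕ → M) → M} (hF : AdditiveAt F i) :
    pcomp i n F 0 = 0 := by
  simpa using pcomp_smul_right 0 n hF 0

theorem pcomp_zero_left (i n : ℕ) (G : (ℕ → M) → M) : pcomp i n 0 G = 0 := by
  simpa using pcomp_smul_left 0 i n 0 G

/-- Slot `b` of `H` becomes slot `b + m - 1` once an operation of arity `m` occupies an earlier slot;
additivity persists there. -/
theorem AdditiveAt.pcomp {H F : (ℕ → M) → M} {a b m : ℕ} (hH : AdditiveAt H b)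
    (hF : DependsBelow m F) (hab : a < b) : AdditiveAt (pcomp a m H F) (b + m - 1) := by
  intro x
  obtain ⟨φ, hφ⟩ := hH fun k => if k < a then x k else
    if k = a then F (fun j => x (a + j)) else x (k + m - 1)
  refine ⟨sgn ((a : ℤ) * ((m : ℤ) - 1)) • φ, fun u => ?_⟩
  rw [AddMonoidHom.smul_apply, ← hφ]
  simp only [_root_.pcomp]
  congr 2
  funext k
  split_ifs <;> first | rfl | omega | skip
  exact hF _ _ fun j hj => if_neg (by omega)

/-- Sequential associativity: `H ∘ₐ (F ∘_c G) = (H ∘ₐ F) ∘_{a+c} G`. Additivity of `H` is needed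
to extract the sign carried by the inner composition. -/
theorem pcomp_nested {a c m n j N : ℕ} {H : (ℕ → M) → M} (F G : (ℕ → M) → M)
    (hH : AdditiveAt H a) (hc : c < m) (hj : j = a + c) (hN : N + 1 = m + n) :
    pcomp a N H (pcomp c n F G) = pcomp j n (pcomp a m H F) G := by
  subst hj
  have e : pcomp c n F G = sgn ((c : ℤ) * ((n : ℤ) - 1)) • fun x =>
    F fun k => if k < c then x k else if k = c then G (fun j => x (c + j)) else x (k + n - 1) := rfl
  rw [e, pcomp_smul_right _ _ hH]
  funext x
  simp only [pcomp, Pi.smul_apply, smul_smul]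
  have e' : sgn ((c : ℤ) * ((n : ℤ) - 1)) * sgn ((a : ℤ) * ((N : ℤ) - 1)) =
      sgn (((a + c : ℕ) : ℤ) * ((n : ℤ) - 1)) * sgn ((a : ℤ) * ((m : ℤ) - 1)) := by
    simp only [← sgn_add]
    rw [show (N : ℤ) = m + n - 1 by omega]
    congr 1
    push_cast
    ring
  rw [e']
  congr 2
  funext k
  split_ifs <;> first | rfl | omega | skip
  · congr 1
    funext l
    split_ifs <;> first | rfl | omega | skip
    · congr 1
      funext i
      congr 1
      omega
    · congr 1
      omega
  · congr 1
    omega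

/-- Parallel associativity: operations placed in distinct slots `a < b` of `H` may be inserted in
either order, at the cost of the Koszul sign `(-1)^{|F||G|}`. -/
theorem pcomp_parallel {a b m n j : ℕ} (H : (ℕ → M) → M) {F : (ℕ → M) → M} (G : (ℕ → M) → M)
    (hF : DependsBelow m F) (hab : a < b) (hj : j + 1 = b + m) :
    pcomp j n (pcomp a m H F) G =
      sgn (((m : ℤ) - 1) * ((n : ℤ) - 1)) • pcomp a m (pcomp b n H G) F := by
  obtain rfl : j = b + m - 1 := by omega
  funext x
  simp only [pcomp, Pi.smul_apply, smul_smul]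
  have e : sgn ((((b + m - 1 : ℕ) : ℤ)) * ((n : ℤ) - 1)) * sgn ((a : ℤ) * ((m : ℤ) - 1)) =
      sgn (((m : ℤ) - 1) * ((n : ℤ) - 1)) *
        (sgn ((a : ℤ) * ((m : ℤ) - 1)) * sgn ((b : ℤ) * ((n : ℤ) - 1))) := by
    simp only [← sgn_add]
    congr 1
    push_cast [show 1 ≤ b + m by omega]
    ring
  rw [e]
  congr 2
  funext k
  split_ifs <;> first | rfl | omega | skip
  · exact hF _ _ fun j hj => if_pos (by omega)
  · congr 1
    funext j
    rw [if_neg (by omega), if_neg (by omega)]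
    congr 1
    omega
  · congr 1
    omega

theorem pcomp_parallel' {a b m n j : ℕ} (H : (ℕ → M) → M) {F : (ℕ → M) → M} (G : (ℕ → M) → M)
    (hF : DependsBelow m F) (hab : a < b) (hj : j + 1 = b + m) :
    pcomp a m (pcomp b n H G) F =
      sgn (((m : ℤ) - 1) * ((n : ℤ) - 1)) • pcomp j n (pcomp a m H F) G := by
  rw [pcomp_parallel H G hF hab hj, smul_smul, sgn_mul_self, one_smul]

/-! ### Reindexing sums over pairs of slots -/

/-- The pairs of slots `a < b` of an operation of arity `p`. -/
def pairs (p : ℕ) : Finset (ℕ × ℕ) :=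
  (Finset.range p ×ˢ Finset.range p).filter fun q => q.1 < q.2

theorem mem_pairs {p : ℕ} {q : ℕ × ℕ} : q ∈ pairs p ↔ q.1 < q.2 ∧ q.2 < p := by
  simp only [pairs, Finset.mem_filter, Finset.mem_product, Finset.mem_range]
  omega

theorem sum_pairs (p : ℕ) (φ : ℕ → ℕ → M) :
    ∑ q ∈ pairs p, φ q.1 q.2 =
      ∑ a ∈ Finset.range p, ∑ b ∈ Finset.range p, if a < b then φ a b else 0 := by
  rw [pairs, Finset.sum_filter, Finset.sum_product]

theorem sum_pairs_succ (p : ℕ) (φ : ℕ → ℕ → M) :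
    ∑ q ∈ pairs (p + 1), φ q.1 q.2 =
      ∑ q ∈ pairs p, φ q.1 q.2 + ∑ a ∈ Finset.range p, φ a p := by
  simp only [sum_pairs]
  rw [Finset.sum_range_succ, Finset.sum_eq_zero (s := Finset.range (p + 1)), add_zero,
    ← Finset.sum_add_distrib]
  · refine Finset.sum_congr rfl fun a ha => ?_
    rw [Finset.sum_range_succ, if_pos (Finset.mem_range.mp ha)]
  · intro b hb
    rw [if_neg]
    have := Finset.mem_range.mp hb
    omega

theorem sum_pairs_succ' (p : ℕ) (φ : ℕ → ℕ → M) :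
    ∑ q ∈ pairs (p + 1), φ q.1 q.2 =
      ∑ q ∈ pairs p, φ (q.1 + 1) (q.2 + 1) + ∑ b ∈ Finset.range p, φ 0 (b + 1) := by
  rw [sum_pairs, sum_pairs p fun a b => φ (a + 1) (b + 1)]
  simp [Finset.sum_range_succ']

/-- Doubling slot `k` out of `p` slots: the `p + 1` resulting positions, sorted by the slot they come
from. -/
theorem sum_range_double {k p : ℕ} (hk : k < p) (ψ : ℕ → M) :
    ∑ a ∈ Finset.range (p + 1), ψ a =
      ∑ a ∈ Finset.range p, if a < k then ψ a else if a = k then ψ k + ψ (k + 1) else ψ (a + 1) := by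
  obtain ⟨d, rfl⟩ : ∃ d, p = k + 1 + d := ⟨p - (k + 1), by omega⟩
  rw [show k + 1 + d + 1 = k + 1 + 1 + d by omega, Finset.sum_range_add, Finset.sum_range_add,
    Finset.sum_range_add, Finset.sum_range_add]
  simp only [Finset.sum_range_one]
  have e1 : ∑ a ∈ Finset.range k,
      (if a < k then ψ a else if a = k then ψ k + ψ (k + 1) else ψ (a + 1)) =
      ∑ a ∈ Finset.range k, ψ a :=
    Finset.sum_congr rfl fun a ha => if_pos (Finset.mem_range.mp ha)
  have e2 : ∑ x ∈ Finset.range d, (if k + 1 + x < k then ψ (k + 1 + x) else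
      if k + 1 + x = k then ψ k + ψ (k + 1) else ψ (k + 1 + x + 1)) =
      ∑ x ∈ Finset.range d, ψ (k + 1 + 1 + x) :=
    Finset.sum_congr rfl fun a _ => by
      rw [if_neg (by omega), if_neg (by omega)]
      congr 1
      omega
  rw [Finset.sum_range_succ, e1, e2]
  simp [add_assoc]

/-- The value of `φ` at the slots `a < b` after slot `k` has been doubled (which moves every slot
beyond `k` up by one), and zero if `k` is one of `a`, `b`. -/
def apart (k : ℕ) (φ : ℕ → ℕ → M) (a b : ℕ) : M :=
  if k < a then φ (a + 1) (b + 1) else if k = a then 0 else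
    if k < b then φ a (b + 1) else if k = b then 0 else φ a b

/-- Pairs of slots after slot `k` has been doubled: either neither slot is a copy of `k`, or only the
left one is, or only the right one is, or they are the two copies `k, k + 1`. -/
theorem sum_pairs_double {k p : ℕ} (hk : k < p) (φ : ℕ → ℕ → M) :
    ∑ q ∈ pairs (p + 1), φ q.1 q.2 =
      ∑ q ∈ pairs p, apart k φ q.1 q.2 +
      ∑ q ∈ pairs p, (if q.1 = k then φ k (q.2 + 1) + φ (k + 1) (q.2 + 1) else 0) +
      ∑ q ∈ pairs p, (if q.2 = k then φ q.1 k + φ q.1 (k + 1) else 0) + φ k (k + 1) := by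
  have e : φ k (k + 1) = ∑ a ∈ Finset.range p, ∑ b ∈ Finset.range p,
      if a = k then if b = k then φ k (k + 1) else 0 else 0 := by
    simp [hk]
  rw [e, sum_pairs, sum_pairs p (apart k φ),
    sum_pairs p fun a b => if a = k then φ k (b + 1) + φ (k + 1) (b + 1) else 0,
    sum_pairs p fun a b => if b = k then φ a k + φ a (k + 1) else 0,
    sum_range_double hk]
  simp only [sum_range_double hk, ← Finset.sum_add_distrib]
  refine Finset.sum_congr rfl fun a _ => ?_
  have : ∀ (c d : Prop) [Decidable c] [Decidable d] (u v w : ℕ → M),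
    (if c then ∑ b ∈ Finset.range p, u b else if d then ∑ b ∈ Finset.range p, v b
      else ∑ b ∈ Finset.range p, w b) =
      ∑ b ∈ Finset.range p, if c then u b else if d then v b else w b := by
    intros; split_ifs <;> rfl
  rw [this]
  refine Finset.sum_congr rfl fun b _ => ?_
  unfold apart
  grind

/-- The inputs of `(h ∘ₐ f) ∘_{b+m-1} g` sorted by where they sit: in a slot of `h` other than `a`
and `b`, in `f`, or in `g`. -/
theorem sum_range_insert_two {a b p m n : ℕ} (hab : a < b) (hb : b < p) (φ : ℕ → M) :
    ∑ c ∈ Finset.range (p + m + n - 2), φ c =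
      ∑ k ∈ Finset.range p, (if k < a then φ k else if k = a then 0 else
        if k < b then φ (k + m - 1) else if k = b then 0 else φ (k + m + n - 2)) +
      ∑ c ∈ Finset.range m, φ (a + c) + ∑ c ∈ Finset.range n, φ (b + m - 1 + c) := by
  obtain ⟨d, rfl⟩ : ∃ d, b = a + 1 + d := ⟨b - (a + 1), by omega⟩
  obtain ⟨e, rfl⟩ : ∃ e, p = a + 1 + d + 1 + e := ⟨p - (a + 1 + d + 1), by omega⟩
  rw [show a + 1 + d + 1 + e + m + n - 2 = a + m + d + n + e by omega]
  simp only [Finset.sum_range_add, Finset.sum_range_one]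
  have e1 : ∀ k ∈ Finset.range a, (if k < a then φ k else if k = a then 0 else
        if k < a + 1 + d then φ (k + m - 1) else if k = a + 1 + d then 0 else φ (k + m + n - 2))
        = φ k := fun k hk => if_pos (Finset.mem_range.mp hk)
  have e2 : ∀ k ∈ Finset.range d, (if a + 1 + k < a then φ (a + 1 + k) else
      if a + 1 + k = a then 0 else if a + 1 + k < a + 1 + d then φ (a + 1 + k + m - 1) else
        if a + 1 + k = a + 1 + d then 0 else φ (a + 1 + k + m + n - 2)) = φ (a + m + k) := by
    intro k hk
    have := Finset.mem_range.mp hk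
    rw [if_neg (by omega), if_neg (by omega), if_pos (by omega)]
    congr 1
    omega
  have e3 : ∀ k ∈ Finset.range e, (if a + 1 + d + 1 + k < a then φ (a + 1 + d + 1 + k) else
      if a + 1 + d + 1 + k = a then 0 else if a + 1 + d + 1 + k < a + 1 + d then
        φ (a + 1 + d + 1 + k + m - 1) else if a + 1 + d + 1 + k = a + 1 + d then 0 else
          φ (a + 1 + d + 1 + k + m + n - 2)) = φ (a + m + d + n + k) := by
    intro k hk
    rw [if_neg (by omega), if_neg (by omega), if_neg (by omega), if_neg (by omega)]
    congr 1
    omega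
  rw [Finset.sum_congr rfl e1, Finset.sum_congr rfl e2, Finset.sum_congr rfl e3,
    show a + 1 + d + m - 1 = a + m + d by omega]
  have hn : ¬ a + 1 + d < a := by omega
  simp [hn]
  abel

/-- The tribraces as a sum over the slots `a < b` of `H` that receive `F` and `G`. -/
theorem triFn_eq (p m n : ℕ) (H F G : (ℕ → M) → M) :
    triFn p m n H F G =
      ∑ q ∈ pairs p, pcomp (q.2 + m - 1) n (pcomp q.1 m H F) G := by
  rw [triFn, Finset.sum_sigma']
  refine Finset.sum_nbij' (fun s => (s.1, s.2 + 1 - m)) (fun q => ⟨q.1, q.2 + m - 1⟩)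
    ?_ ?_ ?_ ?_ ?_
  · rintro ⟨a, j⟩ h
    simp only [Finset.mem_sigma, Finset.mem_range, Finset.mem_Icc, mem_pairs] at h ⊢
    omega
  · rintro ⟨a, b⟩ h
    simp only [Finset.mem_sigma, Finset.mem_range, Finset.mem_Icc, mem_pairs] at h ⊢
    omega
  · rintro ⟨a, j⟩ h
    simp only [Finset.mem_sigma, Finset.mem_range, Finset.mem_Icc] at h
    simp only [Sigma.mk.injEq, heq_eq_eq, true_and]
    omega
  · rintro ⟨a, b⟩ h
    simp only [mem_pairs] at h
    simp only [Prod.mk.injEq, true_and]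
    omega
  · rintro ⟨a, j⟩ h
    simp only [Finset.mem_sigma, Finset.mem_range, Finset.mem_Icc] at h
    simp only
    rw [show j + 1 - m + m - 1 = j by omega]

variable {p m n : ℕ} {μ h f g : (ℕ → M) → M}

/-! ### Expansion of the terms of the deviation -/

theorem triFn_gbr_left (μ h f g : (ℕ → M) → M) :
    triFn (p + 1) m n (gbr p 2 h μ) f g =
      triFn (p + 1) m n (tcomp p 2 h μ) f g -
        sgn ((p : ℤ) - 1) • triFn (p + 1) m n (tcomp 2 p μ h) f g := by
  simp only [triFn_eq, gbr, pcomp_sub_left, pcomp_smul_left, Finset.sum_sub_distrib,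
    Finset.smul_sum]
  norm_num

theorem triFn_gbr_middle (μ f g : (ℕ → M) → M) (hh : ∀ i < p, AdditiveAt h i) :
    triFn p (m + 1) n h (gbr m 2 f μ) g =
      triFn p (m + 1) n h (tcomp m 2 f μ) g -
        sgn ((m : ℤ) - 1) • triFn p (m + 1) n h (tcomp 2 m μ f) g := by
  simp only [triFn_eq, Finset.smul_sum, ← Finset.sum_sub_distrib]
  refine Finset.sum_congr rfl fun q hq => ?_
  rw [mem_pairs] at hq
  have ha := hh q.1 (by omega)
  rw [gbr, pcomp_sub_right _ ha, pcomp_smul_right _ _ ha, pcomp_sub_left, pcomp_smul_left]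
  norm_num

theorem triFn_gbr_right (μ g : (ℕ → M) → M) (hh : ∀ i < p, AdditiveAt h i)
    (hf : DependsBelow m f) :
    triFn p m (n + 1) h f (gbr n 2 g μ) =
      triFn p m (n + 1) h f (tcomp n 2 g μ) -
        sgn ((n : ℤ) - 1) • triFn p m (n + 1) h f (tcomp 2 n μ g) := by
  simp only [triFn_eq, Finset.smul_sum, ← Finset.sum_sub_distrib]
  refine Finset.sum_congr rfl fun q hq => ?_
  rw [mem_pairs] at hq
  have ha := (hh q.2 (by omega)).pcomp hf hq.1
  rw [gbr, pcomp_sub_right _ ha, pcomp_smul_right _ _ ha]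
  norm_num

/-- `f` and `g` are inserted into slots `a < b` of `h`, and then `μ` at input `c` of the result. -/
def muLast (m n : ℕ) (μ h f g : (ℕ → M) → M) (a b c : ℕ) : (ℕ → M) → M :=
  pcomp c 2 (pcomp (b + m - 1) n (pcomp a m h f) g) μ

/-- `μ` is inserted into slot `k` of `h`, and then `f` and `g` into slots `a < b` of `h ∘ₖ μ`. -/
def muFirst (m n : ℕ) (μ h f g : (ℕ → M) → M) (k a b : ℕ) : (ℕ → M) → M :=
  pcomp (b + m - 1) n (pcomp a m (pcomp k 2 h μ) f) g

theorem triFn_tcomp_right (μ g : (ℕ → M) → M) (hh : ∀ i < p, AdditiveAt h i)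
    (hf : DependsBelow m f) :
    triFn p m (n + 1) h f (tcomp n 2 g μ) =
      ∑ q ∈ pairs p, ∑ c ∈ Finset.range n, muLast m n μ h f g q.1 q.2 (q.2 + m - 1 + c) := by
  rw [triFn_eq]
  refine Finset.sum_congr rfl fun q hq => ?_
  rw [mem_pairs] at hq
  have ha := (hh q.2 (by omega)).pcomp hf hq.1
  rw [tcomp, pcomp_sum_right _ _ ha]
  exact Finset.sum_congr rfl fun c hc =>
    pcomp_nested _ _ ha (Finset.mem_range.mp hc) rfl rfl

theorem triFn_tcomp_middle (g : (ℕ → M) → M) (hh : ∀ i < p, AdditiveAt h i)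
    (hμ : DependsBelow 2 μ) :
    triFn p (m + 1) n h (tcomp m 2 f μ) g = sgn ((n : ℤ) - 1) •
      ∑ q ∈ pairs p, ∑ c ∈ Finset.range m, muLast m n μ h f g q.1 q.2 (q.1 + c) := by
  rw [triFn_eq, Finset.smul_sum]
  refine Finset.sum_congr rfl fun q hq => ?_
  rw [mem_pairs] at hq
  have ha := hh q.1 (by omega)
  rw [tcomp, pcomp_sum_right _ _ ha, pcomp_sum_left, Finset.smul_sum]
  refine Finset.sum_congr rfl fun c hc => ?_
  have hc := Finset.mem_range.mp hc
  rw [pcomp_nested (n := 2) f μ ha hc rfl rfl, muLast,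
    pcomp_parallel (b := q.2 + m - 1) _ _ hμ (by omega) (by omega)]
  norm_num

theorem triFn_mu_middle (g : (ℕ → M) → M) (hh : ∀ i < p, AdditiveAt h i) :
    triFn p (m + 1) n h (tcomp 2 m μ f) g =
      ∑ q ∈ pairs p, (muFirst m n μ h f g q.1 q.1 (q.2 + 1) +
        muFirst m n μ h f g q.1 (q.1 + 1) (q.2 + 1)) := by
  rw [triFn_eq]
  refine Finset.sum_congr rfl fun q hq => ?_
  rw [mem_pairs] at hq
  have ha := hh q.1 (by omega)
  rw [tcomp, pcomp_sum_right _ _ ha, pcomp_sum_left, Finset.sum_range_succ, Finset.sum_range_one,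
    pcomp_nested μ f ha zero_lt_two rfl (by omega), pcomp_nested μ f ha one_lt_two rfl (by omega),
    muFirst, muFirst, show q.2 + (m + 1) - 1 = q.2 + 1 + m - 1 by omega, add_zero]

theorem triFn_mu_right (g : (ℕ → M) → M) (hh : ∀ i < p, AdditiveAt h i)
    (hf : DependsBelow m f) :
    triFn p m (n + 1) h f (tcomp 2 n μ g) = sgn ((m : ℤ) - 1) •
      ∑ q ∈ pairs p, (muFirst m n μ h f g q.2 q.1 q.2 +
        muFirst m n μ h f g q.2 q.1 (q.2 + 1)) := by
  rw [triFn_eq, Finset.smul_sum]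
  refine Finset.sum_congr rfl fun q hq => ?_
  rw [mem_pairs] at hq
  have ha := (hh q.2 (by omega)).pcomp hf hq.1
  rw [tcomp, pcomp_sum_right _ _ ha, Finset.sum_range_succ, Finset.sum_range_one,
    pcomp_nested μ g ha zero_lt_two rfl (by omega), pcomp_nested μ g ha one_lt_two rfl (by omega),
    pcomp_parallel h μ hf hq.1 (by omega), pcomp_smul_left, pcomp_smul_left, ← smul_add,
    muFirst, muFirst, add_zero, show q.2 + m - 1 + 1 = q.2 + 1 + m - 1 by omega]
  norm_num

/-- `{h, f, g} • μ`: `μ` goes into a free slot of `h`, into `f`, or into `g`. -/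
theorem tcomp_triFn (hf : DependsBelow m f) (hg : DependsBelow n g) (hμ : DependsBelow 2 μ) :
    tcomp (p + m + n - 2) 2 (triFn p m n h f g) μ =
      sgn (((m : ℤ) - 1) + ((n : ℤ) - 1)) •
        (∑ k ∈ Finset.range p, ∑ q ∈ pairs p, apart k (muFirst m n μ h f g k) q.1 q.2) +
      ∑ q ∈ pairs p, ∑ c ∈ Finset.range m, muLast m n μ h f g q.1 q.2 (q.1 + c) +
      ∑ q ∈ pairs p, ∑ c ∈ Finset.range n, muLast m n μ h f g q.1 q.2 (q.2 + m - 1 + c) := by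
  simp only [tcomp, triFn_eq, pcomp_sum_left]
  rw [Finset.sum_comm, Finset.sum_comm (s := Finset.range p), Finset.smul_sum,
    ← Finset.sum_add_distrib, ← Finset.sum_add_distrib]
  refine Finset.sum_congr rfl fun q hq => ?_
  obtain ⟨a, b⟩ := q
  rw [mem_pairs] at hq
  dsimp only at hq ⊢
  change ∑ c ∈ Finset.range (p + m + n - 2), muLast m n μ h f g a b c = _
  rw [sum_range_insert_two hq.1 hq.2, Finset.smul_sum]
  congr 2
  refine Finset.sum_congr rfl fun k _ => ?_
  unfold apart
  rcases lt_trichotomy k a with hka | rfl | hka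
  · rw [if_pos hka, if_pos hka, muLast, muFirst,
      pcomp_parallel' (j := b + m) _ _ hμ (by omega) (by omega),
      pcomp_parallel' (j := a + 1) _ _ hμ hka (by omega), pcomp_smul_left, smul_smul,
      show b + 1 + m - 1 = b + m by omega, sgn_add, mul_comm]
    norm_num
  · simp
  rw [if_neg hka.not_gt, if_neg hka.ne', if_neg hka.not_gt, if_neg hka.ne']
  rcases lt_trichotomy k b with hkb | rfl | hkb
  · rw [if_pos hkb, if_pos hkb, muLast, muFirst,
      pcomp_parallel' (j := b + m) _ _ hμ (by omega) (by omega),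
      pcomp_parallel (b := k) _ _ hf hka (by omega), pcomp_smul_left, smul_smul,
      show b + 1 + m - 1 = b + m by omega, sgn_add, mul_comm]
    norm_num
  · simp
  · rw [if_neg hkb.not_gt, if_neg hkb.ne', if_neg hkb.not_gt, if_neg hkb.ne',
      muLast, muFirst,
      pcomp_parallel (b := k + m - 1) _ _ hg (by omega) (by omega),
      pcomp_parallel (b := k) _ _ hf hka (by omega), pcomp_smul_left, smul_smul,
      sgn_add, mul_comm]
    norm_num

/-- `{h • μ, f, g}`: neither `f` nor `g` is inserted into `μ`, or only `f`, or only `g`, or both. -/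
theorem triFn_tcomp_left (μ h f g : (ℕ → M) → M) :
    triFn (p + 1) m n (tcomp p 2 h μ) f g =
      ∑ k ∈ Finset.range p, ∑ q ∈ pairs p, apart k (muFirst m n μ h f g k) q.1 q.2 +
      ∑ q ∈ pairs p, (muFirst m n μ h f g q.1 q.1 (q.2 + 1) +
        muFirst m n μ h f g q.1 (q.1 + 1) (q.2 + 1)) +
      ∑ q ∈ pairs p, (muFirst m n μ h f g q.2 q.1 q.2 +
        muFirst m n μ h f g q.2 q.1 (q.2 + 1)) +
      ∑ k ∈ Finset.range p, muFirst m n μ h f g k k (k + 1) := by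
  simp only [tcomp, triFn_eq, pcomp_sum_left]
  rw [Finset.sum_comm]
  have e : ∀ k ∈ Finset.range p, _ := fun k hk =>
    sum_pairs_double (Finset.mem_range.mp hk) (muFirst m n μ h f g k)
  refine (Finset.sum_congr rfl e).trans ?_
  simp only [Finset.sum_add_distrib (s := Finset.range p)]
  congr 2
  · congr 1
    rw [Finset.sum_comm]
    refine Finset.sum_congr rfl fun q hq => ?_
    rw [mem_pairs] at hq
    rw [Finset.sum_ite_eq, if_pos (Finset.mem_range.mpr (by omega))]
  · rw [Finset.sum_comm]
    refine Finset.sum_congr rfl fun q hq => ?_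
    rw [mem_pairs] at hq
    rw [Finset.sum_ite_eq, if_pos (Finset.mem_range.mpr (by omega))]

/-- `h • (f ⌣ g)` is the part of `{h • μ, f, g}` in which both `f` and `g` are inserted into `μ`. -/
theorem tcomp_cupFn (f g : (ℕ → M) → M) (hh : ∀ i < p, AdditiveAt h i) :
    tcomp p (m + n) h (cupFn m n μ f g) =
      sgn (m : ℤ) • ∑ k ∈ Finset.range p, muFirst m n μ h f g k k (k + 1) := by
  rw [tcomp, Finset.smul_sum]
  refine Finset.sum_congr rfl fun k hk => ?_
  have ha := hh k (Finset.mem_range.mp hk)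
  rw [cupFn, pcomp_smul_right _ _ ha, pcomp_nested (m := m + 1) _ _ ha (by omega) rfl (by omega),
    pcomp_nested μ f ha zero_lt_two rfl (by omega), muFirst,
    show k + 1 + m - 1 = k + m by omega, add_zero]

/-- `{μ • h, f, g}`: both `f` and `g` are inserted into `h`, or only `f`, or only `g`; the latter two
produce the cup products. -/
theorem triFn_mu_left (g : (ℕ → M) → M)
    (hμ : ∀ i < 2, AdditiveAt μ i) (hf : DependsBelow m f) :
    triFn (p + 1) m n (tcomp 2 p μ h) f g =
      tcomp 2 (p + m + n - 2) μ (triFn p m n h f g) +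
      sgn ((p + m - 1 : ℕ) : ℤ) • cupFn (p + m - 1) n μ (tcomp p m h f) g +
      sgn (((p : ℤ) - 1) * ((m : ℤ) - 1) + m) • cupFn m (p + n - 1) μ f (tcomp p n h g) := by
  have h0 := hμ 0 zero_lt_two
  have h1 := hμ 1 one_lt_two
  have hfm := h1.pcomp hf zero_lt_one
  rw [show 1 + m - 1 = m by omega] at hfm
  have e1 : sgn ((p + m - 1 : ℕ) : ℤ) • cupFn (p + m - 1) n μ (tcomp p m h f) g =
      ∑ a ∈ Finset.range p, pcomp (p + m - 1) n (pcomp a m (pcomp 0 p μ h) f) g := by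
    rw [cupFn, smul_smul, sgn_mul_self, one_smul, tcomp, pcomp_sum_right _ _ h0, pcomp_sum_left]
    refine Finset.sum_congr rfl fun a ha => ?_
    have ha := Finset.mem_range.mp ha
    rw [pcomp_nested h f h0 ha (zero_add a).symm (by omega)]
  have e2 : sgn (((p : ℤ) - 1) * ((m : ℤ) - 1) + m) • cupFn m (p + n - 1) μ f (tcomp p n h g) =
      ∑ b ∈ Finset.range p, pcomp (b + 1 + m - 1) n (pcomp 0 m (pcomp 1 p μ h) f) g := by
    rw [cupFn, smul_smul, sgn_add, mul_assoc, sgn_mul_self, mul_one, tcomp,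
      pcomp_sum_right _ _ hfm, Finset.smul_sum]
    refine Finset.sum_congr rfl fun b hb => ?_
    have hb := Finset.mem_range.mp hb
    rw [pcomp_nested h g hfm hb rfl (by omega),
      pcomp_parallel' μ h hf zero_lt_one (add_comm m 1), pcomp_smul_left,
      show b + 1 + m - 1 = m + b by omega, mul_comm]
  have e3 : pcomp 0 (p + m + n - 2) μ (triFn p m n h f g) =
      ∑ q ∈ pairs p, pcomp (q.2 + m - 1) n (pcomp q.1 m (pcomp 0 p μ h) f) g := by
    rw [triFn_eq, pcomp_sum_right _ _ h0]
    refine Finset.sum_congr rfl fun q hq => ?_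
    rw [mem_pairs] at hq
    rw [pcomp_nested (m := p + m - 1) _ g h0 (by omega) (zero_add _).symm (by omega),
      pcomp_nested (m := p) h f h0 (by omega) (zero_add _).symm (by omega)]
  have e4 : pcomp 1 (p + m + n - 2) μ (triFn p m n h f g) =
      ∑ q ∈ pairs p, pcomp (q.2 + 1 + m - 1) n (pcomp (q.1 + 1) m (pcomp 1 p μ h) f) g := by
    rw [triFn_eq, pcomp_sum_right _ _ h1]
    refine Finset.sum_congr rfl fun q hq => ?_
    rw [mem_pairs] at hq
    rw [pcomp_nested (m := p + m - 1) (j := q.2 + 1 + m - 1) _ g h1 (by omega) (by omega)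
      (by omega), pcomp_nested (m := p) h f h1 (by omega) (add_comm _ _) (by omega)]
  have e5 : triFn (p + 1) m n (tcomp 2 p μ h) f g =
      ∑ q ∈ pairs (p + 1), pcomp (q.2 + m - 1) n (pcomp q.1 m (pcomp 0 p μ h) f) g +
      ∑ q ∈ pairs (p + 1), pcomp (q.2 + m - 1) n (pcomp q.1 m (pcomp 1 p μ h) f) g := by
    simp only [triFn_eq, tcomp, pcomp_sum_left]
    rw [Finset.sum_comm, Finset.sum_range_succ, Finset.sum_range_one]
  rw [e1, e2, e5,
    sum_pairs_succ p fun a b => pcomp (b + m - 1) n (pcomp a m (pcomp 0 p μ h) f) g,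
    sum_pairs_succ' p fun a b => pcomp (b + m - 1) n (pcomp a m (pcomp 1 p μ h) f) g,
    tcomp, Finset.sum_range_succ, Finset.sum_range_one, e3, e4]
  abel

end

/-- Theorem on the derivation deviation of `∂` over the tribraces: in the endomorphism operad,
`(-1)^{deg g} (dev_braces ∂)(h ⊗ f ⊗ g) = (h • f) ⌣ g + (-1)^{|h|·deg f} f ⌣ (h • g) - h • (f ⌣ g)`. -/
theorem endop_dev_tribraces {p m n : ℕ} (μ : MultilinearMap K (fun _ : Fin 2 => L) L)
    (h : MultilinearMap K (fun _ : Fin p => L) L) (f : MultilinearMap K (fun _ : Fin m => L) L) (g : MultilinearMap K (fun _ : Fin n => L) L) :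
    sgn (n : ℤ) •
        (gbr (p + m + n - 2) 2 (triFn p m n (toFn h) (toFn f) (toFn g)) (toFn μ) -
          triFn p m (n + 1) (toFn h) (toFn f) (gbr n 2 (toFn g) (toFn μ)) -
          sgn ((n : ℤ) - 1) • triFn p (m + 1) n (toFn h) (gbr m 2 (toFn f) (toFn μ)) (toFn g) -
          sgn (((n : ℤ) - 1) + ((m : ℤ) - 1)) •
            triFn (p + 1) m n (gbr p 2 (toFn h) (toFn μ)) (toFn f) (toFn g)) =
      cupFn (p + m - 1) n (toFn μ) (tcomp p m (toFn h) (toFn f)) (toFn g) +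
        sgn (((p : ℤ) - 1) * (m : ℤ)) •
          cupFn m (p + n - 1) (toFn μ) (toFn f) (tcomp p n (toFn h) (toFn g)) -
        tcomp p (m + n) (toFn h) (cupFn m n (toFn μ) (toFn f) (toFn g)) := by
  have hh : ∀ i < p, AdditiveAt (toFn h) i := fun i hi => toFn_additiveAt h hi
  have hμ : ∀ i < 2, AdditiveAt (toFn μ) i := fun i hi => toFn_additiveAt μ hi
  have hμd := toFn_dependsBelow μ
  have hf := toFn_dependsBelow f
  have hg := toFn_dependsBelow g
  -- Where the truncated subtraction in `p + m + n - 2` matters, `p < 2` and the tribraces vanish.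
  have hT : sgn ((((p + m + n - 2 : ℕ) : ℤ) - 1) * (((2 : ℕ) : ℤ) - 1)) •
        tcomp 2 (p + m + n - 2) (toFn μ) (triFn p m n (toFn h) (toFn f) (toFn g)) =
      sgn ((p : ℤ) + m + n - 1) •
        tcomp 2 (p + m + n - 2) (toFn μ) (triFn p m n (toFn h) (toFn f) (toFn g)) := by
    rcases lt_or_ge p 2 with hp | hp
    · have h0 : triFn p m n (toFn h) (toFn f) (toFn g) = 0 := by
        rw [triFn, show p - 1 = 0 by omega, Finset.range_zero, Finset.sum_empty]
      rw [h0, tcomp, Finset.sum_eq_zero, smul_zero, smul_zero]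
      intro i hi
      exact pcomp_zero_right _ (hμ i (Finset.mem_range.mp hi))
    · rw [sgn_congr (-1)]
      push_cast [show 2 ≤ p + m + n by omega]
      ring
  -- The truncated subtraction in `p + m - 1` matters only for `p = 0`, where `h • f = 0`.
  have hC : sgn ((p + m - 1 : ℕ) : ℤ) •
        cupFn (p + m - 1) n (toFn μ) (tcomp p m (toFn h) (toFn f)) (toFn g) =
      sgn ((p : ℤ) + m - 1) •
        cupFn (p + m - 1) n (toFn μ) (tcomp p m (toFn h) (toFn f)) (toFn g) := by
    rcases Nat.eq_zero_or_pos p with hp | hp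
    · have h0 : tcomp p m (toFn h) (toFn f) = 0 := by
        subst hp
        simp [tcomp]
      rw [h0, cupFn, pcomp_zero_right _ (hμ 0 zero_lt_two), pcomp_zero_left, smul_zero, smul_zero,
        smul_zero]
    · push_cast [show 1 ≤ p + m by omega]
      rfl
  rw [gbr, hT, triFn_gbr_left, triFn_gbr_middle _ _ _ hh, triFn_gbr_right _ _ hh hf,
    tcomp_triFn hf hg hμd, triFn_tcomp_right _ _ hh hf, triFn_tcomp_middle _ hh hμd,
    triFn_mu_middle _ hh, triFn_mu_right _ hh hf, triFn_tcomp_left, tcomp_cupFn _ _ hh,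
    triFn_mu_left _ hμ hf, hC]
  -- The remaining identity is linear in the expanded sums; its signs depend on parities only.
  simp only [sgn_eq, Int.even_add, Int.even_sub, Int.even_mul]
  by_cases hp : Even (p : ℤ) <;> by_cases hm : Even (m : ℤ) <;> by_cases hn : Even (n : ℤ) <;>
    simp only [hp, hm, hn] <;> norm_num <;> abel
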